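/- Let L > 0 and μ < L, set κ := μ/L, and let f : E → ℝ be a differentiable function on a real inner product space E with f ∈ F_{μ,L}. Fix an integer k ≥ 1 and a stepsize γ > 0 with γL ∈ (1, 2/(1 + max{κ,0})) such that T_i(γL, κ) ≥ 0 for all integers 1 ≤ i ≤ k (equivalently, γL ≥ γ̄_k, the k-th stepsize threshold). Let x_0, x_1, …, x_{k+1} be generated by x_{i+1} = x_i − γ∇f(x_i), and write ρ := 1 − γL, η := 1 − γμ (with γμ := γ·μ). Then (f(x_0) − f(x_{k+1}))/γ ≥ E_{k+1}(ρ) · ‖∇f(x_{k+1})‖²/2 + (η²·T_{k+1}(γL,κ)/(η − ρ)²) · ‖∇f(x_{k+1}) − ρ·∇f(x_k)‖²/2. -/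

import Mathlib

/-- `E_k(x) := Σ_{j=1}^{2k} x^{−j}` (so `E_0 = 0`). -/
noncomputable def Efun (k : ℕ) (x : ℝ) : ℝ := ∑ j ∈ Finset.Icc 1 (2 * k), x ^ (-(j : ℤ))

/-- `T_k(t, κ) := E_k(1 − κ·t) − E_k(1 − t)`. -/
noncomputable def Tfun (k : ℕ) (t κ : ℝ) : ℝ := Efun k (1 - κ * t) - Efun k (1 - t)

/-!
Write `gᵢ = ∇f(xᵢ)`, `uᵢ = gᵢ₊₁ - ρ gᵢ` and `m = η - ρ = γ(L - μ)`. The convex function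
`L/2‖·‖² - f` is `(L - μ)`-smooth, so its gradient is cocoercive, which bounds the decrease of `f`
over one step from below and makes the gaps `⟪uᵢ, gᵢ⟫ - ‖uᵢ‖²/m` nonnegative. Since
`ρ² E_{n+1}(ρ) = E_n(ρ) + 1 + ρ`, the decreases add up to the asserted bound plus
`-ρ E_{n+1}(ρ)` times the last gap, provided that each step can trade `‖uₙ₊₁‖²` for `η²‖uₙ‖²`, with
weight `T_{n+1}/(2m²) ≥ 0`. Cocoercivity between `xₙ` and `xₙ₊₂` does this at a cost proportional to
the gap at step `n`, and the multiple `-ρ E_{n+1}(ρ)` of that gap already gained is enough to pay.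
-/

open scoped RealInnerProductSpace Gradient

section Interpolation

lemma add_fderiv_sub_le_of_convexOn {V : Type*} [NormedAddCommGroup V] [NormedSpace ℝ V]
    {s : Set V} {φ : V → ℝ} {φ' : V →L[ℝ] ℝ} {x y : V} (hφ : ConvexOn ℝ s φ)
    (hx : x ∈ s) (hy : y ∈ s) (hφ' : HasFDerivAt φ φ' x) : φ x + φ' (y - x) ≤ φ y := by
  have hconv := hφ.comp_affineMap (AffineMap.lineMap (k := ℝ) x y)
  have hderiv : HasDerivAt (φ ∘ AffineMap.lineMap (k := ℝ) x y) (φ' (y - x)) 0 :=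
    HasFDerivAt.comp_hasDerivAt (0 : ℝ) (by simpa using hφ') AffineMap.hasDerivAt_lineMap
  have hslope := hconv.le_slope_of_hasDerivAt (by simpa) (by simpa) one_pos hderiv
  simp only [slope_def_field, Function.comp_apply, AffineMap.lineMap_apply_one,
    AffineMap.lineMap_apply_zero, sub_zero, div_one] at hslope
  linarith

variable {E : Type*} [NormedAddCommGroup E] [InnerProductSpace ℝ E] [CompleteSpace E]
  {h : E → ℝ} {p q a b : E} {M : ℝ}

lemma add_inner_gradient_le_of_convexOn {s : Set E} (hh : ConvexOn ℝ s h) (ha : a ∈ s)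
    (hb : b ∈ s) (hp : HasGradientAt h p a) : h a + ⟪p, b - a⟫ ≤ h b := by
  simpa only [InnerProductSpace.toDual_apply_apply] using
    add_fderiv_sub_le_of_convexOn hh ha hb hp.hasFDerivAt

lemma hasGradientAt_half_mul_norm_sq_sub (c : ℝ) (hp : HasGradientAt h p a) :
    HasGradientAt (fun z => c / 2 * ‖z‖ ^ 2 - h z) (c • a - p) a := by
  rw [hasGradientAt_iff_hasFDerivAt]
  refine (((hasStrictFDerivAt_norm_sq a).hasFDerivAt.const_mul (c / 2)).sub
    hp.hasFDerivAt).congr_fderiv ?_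
  ext z
  simp only [sub_apply, smul_apply, coe_innerSL_apply, nsmul_eq_mul, Nat.cast_ofNat, smul_eq_mul,
    InnerProductSpace.toDual_apply_apply, map_sub, map_smul]
  ring

lemma le_add_inner_gradient_add_norm_sq
    (hM : ConvexOn ℝ Set.univ (fun z => M / 2 * ‖z‖ ^ 2 - h z)) (hp : HasGradientAt h p a) (b : E) :
    h b ≤ h a + ⟪p, b - a⟫ + M / 2 * ‖b - a‖ ^ 2 := by
  have htangent := add_inner_gradient_le_of_convexOn hM (Set.mem_univ a) (Set.mem_univ b)
    (hasGradientAt_half_mul_norm_sq_sub M hp)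
  rw [norm_sub_sq_real]
  rw [inner_sub_left, real_inner_smul_left, inner_sub_right a, real_inner_self_eq_norm_sq,
    real_inner_comm b a] at htangent
  linarith

/- Both bounds on `h` are compared at the minimiser `z` of
`h a + ⟪p, z - a⟫ + M/2 ‖z - a‖² - (h b + ⟪q, z - b⟫)`. -/
lemma add_inner_gradient_add_norm_sq_sub_le (hM₀ : M ≠ 0) (hh : ConvexOn ℝ Set.univ h)
    (hM : ConvexOn ℝ Set.univ (fun z => M / 2 * ‖z‖ ^ 2 - h z))
    (hp : HasGradientAt h p a) (hq : HasGradientAt h q b) :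
    h b + ⟪q, a - b⟫ + ‖p - q‖ ^ 2 / (2 * M) ≤ h a := by
  let z := a - M⁻¹ • (p - q)
  have hlower : h b + ⟪q, z - b⟫ ≤ h z :=
    add_inner_gradient_le_of_convexOn hh (Set.mem_univ b) (Set.mem_univ z) hq
  have hupper : h z ≤ h a + ⟪p, z - a⟫ + M / 2 * ‖z - a‖ ^ 2 :=
    le_add_inner_gradient_add_norm_sq hM hp z
  have hvalue : ⟪q, z - b⟫ - ⟪p, z - a⟫ - M / 2 * ‖z - a‖ ^ 2 =
      ⟪q, a - b⟫ + ‖p - q‖ ^ 2 / (2 * M) := by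
    simp only [z, ← real_inner_self_eq_norm_sq, inner_sub_left, inner_sub_right,
      real_inner_smul_left, real_inner_smul_right]
    rw [real_inner_comm p q]
    field_simp
    ring
  linarith

/-- The class `F_{μ,L}`: differentiable functions whose curvature lies between `μ` and `L`,
expressed by convexity of the two quadratic perturbations. Negative `μ` (weak convexity) is
allowed. -/
structure HasCurvatureBounds (μ L : ℝ) (f : E → ℝ) : Prop where
  lt : μ < L
  differentiable : Differentiable ℝ f
  upper : ConvexOn ℝ Set.univ (fun z => L / 2 * ‖z‖ ^ 2 - f z)
  lower : ConvexOn ℝ Set.univ (fun z => f z - μ / 2 * ‖z‖ ^ 2)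

lemma HasCurvatureBounds.interpolation {μ L : ℝ} {f : E → ℝ} (hf : HasCurvatureBounds μ L f)
    (a b : E) :
    f a ≤ f b + ⟪∇ f b, a - b⟫ + L / 2 * ‖a - b‖ ^ 2 -
      ‖L • (a - b) - (∇ f a - ∇ f b)‖ ^ 2 / (2 * (L - μ)) := by
  have hgrad (z : E) := hasGradientAt_half_mul_norm_sq_sub L (hf.differentiable z).hasGradientAt
  have hlower : ConvexOn ℝ Set.univ
      (fun z => (L - μ) / 2 * ‖z‖ ^ 2 - (L / 2 * ‖z‖ ^ 2 - f z)) := by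
    convert hf.lower using 2
    ring
  have hsmooth := add_inner_gradient_add_norm_sq_sub_le (sub_pos.2 hf.lt).ne' hf.upper hlower
    (hgrad a) (hgrad b)
  have hnorm : ‖a - b‖ ^ 2 = ‖a‖ ^ 2 - ‖b‖ ^ 2 - 2 * ⟪b, a - b⟫ := by
    rw [norm_sub_sq_real, inner_sub_right, real_inner_self_eq_norm_sq, real_inner_comm b a]
    ring
  rw [sub_sub_sub_comm, ← smul_sub, inner_sub_left, real_inner_smul_left] at hsmooth
  rw [hnorm]
  linarith

end Interpolation

section Efun

/-- The factor `1 + x` comes from pairing the terms `x^{-(2j-1)}` and `x^{-2j}`. -/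
lemma Efun_eq_mul_geom_sum (n : ℕ) (x : ℝ) :
    Efun n x = (1 + x) * ((x ^ 2)⁻¹ * ∑ j ∈ Finset.range n, (x ^ 2)⁻¹ ^ j) := by
  induction n with
  | zero => simp [Efun]
  | succ n ih =>
    have hstep : Efun (n + 1) x = Efun n x + x⁻¹ ^ (2 * n + 1) + x⁻¹ ^ (2 * n + 2) := by
      simp only [Efun, zpow_neg, zpow_natCast, inv_pow]
      rw [show 2 * (n + 1) = 2 * n + 1 + 1 by ring, Finset.sum_Icc_succ_top (by lia),
        Finset.sum_Icc_succ_top (by lia)]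
    have hpair : (1 + x) * (x⁻¹ ^ 2 * x⁻¹ ^ (2 * n)) = x⁻¹ ^ (2 * n + 1) + x⁻¹ ^ (2 * n + 2) := by
      rcases eq_or_ne x 0 with rfl | hx
      · simp
      · linear_combination x⁻¹ ^ (2 * n + 1) * mul_inv_cancel₀ hx
    rw [hstep, ih, Finset.sum_range_succ, add_assoc, ← hpair, ← inv_pow x 2, ← pow_mul x⁻¹ 2 n]
    ring

lemma Efun_zero (x : ℝ) : Efun 0 x = 0 := by simp [Efun]

lemma sq_mul_Efun (n : ℕ) {x : ℝ} (hx : x ≠ 0) :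
    x ^ 2 * Efun n x = (1 + x) * ∑ j ∈ Finset.range n, (x ^ 2)⁻¹ ^ j := by
  rw [Efun_eq_mul_geom_sum, mul_left_comm, mul_inv_cancel_left₀ (pow_ne_zero 2 hx)]

lemma sq_mul_Efun_succ (n : ℕ) {x : ℝ} (hx : x ≠ 0) :
    x ^ 2 * Efun (n + 1) x = Efun n x + 1 + x := by
  rw [sq_mul_Efun _ hx, geom_sum_succ, Efun_eq_mul_geom_sum]
  ring

lemma Efun_nonneg (n : ℕ) {x : ℝ} (hx : -1 ≤ x) : 0 ≤ Efun n x := by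
  rw [Efun_eq_mul_geom_sum]
  have : 0 ≤ 1 + x := by linarith
  positivity

variable {ρ η : ℝ}

lemma sq_mul_Efun_sub_succ (n : ℕ) (hρ : ρ ≠ 0) (hη : η ≠ 0) :
    η ^ 2 * (Efun (n + 1) η - Efun (n + 1) ρ) =
      (η - ρ) * (1 - (ρ + η) * Efun (n + 1) ρ) + (Efun n η - Efun n ρ) := by
  linear_combination sq_mul_Efun_succ n hη - sq_mul_Efun_succ n hρ

lemma sq_mul_Efun_le (n : ℕ) (hρ₀ : ρ ≠ 0) (hρ₁ : -1 ≤ ρ) (hη : -1 ≤ η) (hρη : |ρ| ≤ |η|) :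
    η ^ 2 * (1 + ρ) * Efun n η ≤ ρ ^ 2 * (1 + η) * Efun n ρ := by
  have hsq : ρ ^ 2 ≤ η ^ 2 := sq_le_sq.2 hρη
  have hη₀ : η ≠ 0 := abs_pos.1 ((abs_pos.2 hρ₀).trans_le hρη)
  have hweight : 0 ≤ (1 + ρ) * (1 + η) := mul_nonneg (by linarith) (by linarith)
  calc η ^ 2 * (1 + ρ) * Efun n η
      = (1 + ρ) * (1 + η) * ∑ j ∈ Finset.range n, (η ^ 2)⁻¹ ^ j := by
        linear_combination (1 + ρ) * sq_mul_Efun n hη₀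
    _ ≤ (1 + ρ) * (1 + η) * ∑ j ∈ Finset.range n, (ρ ^ 2)⁻¹ ^ j := by gcongr
    _ = ρ ^ 2 * (1 + η) * Efun n ρ := by
        linear_combination -(1 + η) * sq_mul_Efun n hρ₀

lemma mul_Efun_sub_le (n : ℕ) (hρ₀ : ρ < 0) (hρ₁ : -1 ≤ ρ) (hρη : 0 ≤ η + ρ) :
    η * (1 + ρ) * (Efun n η - Efun n ρ) ≤ (η - ρ) ^ 2 * Efun n ρ := by
  have hη : 0 < η := by linarith
  have hmono := sq_mul_Efun_le n hρ₀.ne hρ₁ (by linarith)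
    (by rw [abs_of_neg hρ₀, abs_of_pos hη]; linarith)
  have hrest : 0 ≤ (η - ρ) * (η ^ 2 + (η + ρ)) * Efun n ρ :=
    mul_nonneg (mul_nonneg (by linarith) (by positivity)) (Efun_nonneg n hρ₁)
  refine le_of_mul_le_mul_left ?_ hη
  linear_combination hmono + hrest

end Efun

section Potential

variable {E : Type*} [NormedAddCommGroup E] [InnerProductSpace ℝ E]

/-- The slack in the cocoercivity inequality `‖w‖² / c ≤ ⟪w, d⟫`. -/
noncomputable def cocoercivityGap (c : ℝ) (w d : E) : ℝ := ⟪w, d⟫ - ‖w‖ ^ 2 / c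

/-- The guaranteed amount of `(f a - f b) / γ` in one gradient step from `a` to `b`, in terms of the
gradients `p` at `a` and `q` at `b`. -/
noncomputable def stepDecrease (ρ η : ℝ) (p q : E) : ℝ :=
  ‖q - ρ • p‖ ^ 2 / (2 * (η - ρ)) + (1 + ρ) * ‖p‖ ^ 2 / 2

/-- A lower bound for `(f x₀ - f xₙ) / γ` in terms of the last two gradients `p` and `q`. Its
first two terms are the bound of the multistep descent theorem, where `T_n` appears as
`E_n(η) - E_n(ρ)`; the last one is the reserve that makes the induction on `n` work. -/
noncomputable def descentPotential (ρ η : ℝ) (n : ℕ) (p q : E) : ℝ :=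
  Efun n ρ * (‖q‖ ^ 2 / 2) +
    η ^ 2 * (Efun n η - Efun n ρ) / (η - ρ) ^ 2 * (‖q - ρ • p‖ ^ 2 / 2) +
    -ρ * Efun n ρ * cocoercivityGap (η - ρ) (q - ρ • p) p

lemma cocoercivityGap_smul_right {γ : ℝ} (hγ : γ ≠ 0) (c : ℝ) (w d : E) :
    cocoercivityGap c w (γ • d) = γ * cocoercivityGap (γ * c) w d := by
  rw [cocoercivityGap, cocoercivityGap, real_inner_smul_right, mul_sub, ← mul_div_assoc,
    mul_div_mul_left _ _ hγ]

variable {ρ η : ℝ}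

lemma descentPotential_succ (n : ℕ) (hρ : ρ ≠ 0) (hη : η ≠ 0) (hρη : η - ρ ≠ 0) (q r : E) :
    descentPotential ρ η (n + 1) q r =
      Efun n ρ * (‖q‖ ^ 2 / 2) + (Efun n η - Efun n ρ) / (η - ρ) ^ 2 * (‖r - ρ • q‖ ^ 2 / 2) +
        stepDecrease ρ η q r := by
  have hEρ : Efun n ρ = ρ ^ 2 * Efun (n + 1) ρ - 1 - ρ := by linarith [sq_mul_Efun_succ n hρ]
  rw [descentPotential, sq_mul_Efun_sub_succ n hρ hη]
  generalize Efun n η - Efun n ρ = T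
  rw [hEρ]
  simp only [stepDecrease, cocoercivityGap, ← real_inner_self_eq_norm_sq, inner_sub_left,
    inner_sub_right, real_inner_smul_left, real_inner_smul_right]
  rw [real_inner_comm q r]
  field_simp
  ring

lemma residual_norm_sq_sub_eq (hρη : η - ρ ≠ 0) (p q r : E) :
    η ^ 2 * ‖q - ρ • p‖ ^ 2 - ‖r - ρ • q‖ ^ 2 =
      (η + ρ) / (η - ρ) * ‖η • (q - ρ • p) - (r - ρ • q)‖ ^ 2 +
      2 * η * (-ρ * cocoercivityGap (η - ρ) ((r - ρ • q) + (q - ρ • p)) (p + q) +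
        (1 + ρ) * cocoercivityGap (η - ρ) (r - ρ • q) q +
        ρ * (1 + ρ) * cocoercivityGap (η - ρ) (q - ρ • p) p) := by
  simp only [cocoercivityGap, ← real_inner_self_eq_norm_sq, inner_sub_left, inner_sub_right,
    inner_add_left, inner_add_right, real_inner_smul_left, real_inner_smul_right]
  rw [real_inner_comm p q, real_inner_comm p r, real_inner_comm q r]
  field_simp
  ring

lemma residual_norm_sq_le (hρ₀ : ρ < 0) (hρ₁ : -1 ≤ ρ) (hρη : 0 ≤ η + ρ) {p q r : E}
    (hqr : 0 ≤ cocoercivityGap (η - ρ) (r - ρ • q) q)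
    (hpr : 0 ≤ cocoercivityGap (η - ρ) ((r - ρ • q) + (q - ρ • p)) (p + q)) :
    ‖r - ρ • q‖ ^ 2 ≤ η ^ 2 * ‖q - ρ • p‖ ^ 2 +
      2 * η * (1 + ρ) * (-ρ * cocoercivityGap (η - ρ) (q - ρ • p) p) := by
  have hη : 0 ≤ η := by linarith
  have hm : 0 < η - ρ := by linarith
  have hsquare : 0 ≤ (η + ρ) / (η - ρ) * ‖η • (q - ρ • p) - (r - ρ • q)‖ ^ 2 := by positivity
  have hgap_pr := mul_nonneg hη (mul_nonneg (neg_nonneg.2 hρ₀.le) hpr)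
  have hgap_qr := mul_nonneg hη (mul_nonneg (neg_le_iff_add_nonneg'.1 hρ₁) hqr)
  linear_combination hsquare + 2 * hgap_pr + 2 * hgap_qr - residual_norm_sq_sub_eq hm.ne' p q r

lemma descentPotential_succ_le (n : ℕ) (hρ₀ : ρ < 0) (hρ₁ : -1 ≤ ρ) (hρη : 0 ≤ η + ρ)
    (hT : 0 ≤ Efun n η - Efun n ρ) {p q r : E}
    (hpq : 0 ≤ cocoercivityGap (η - ρ) (q - ρ • p) p)
    (hqr : 0 ≤ cocoercivityGap (η - ρ) (r - ρ • q) q)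
    (hpr : 0 ≤ cocoercivityGap (η - ρ) ((r - ρ • q) + (q - ρ • p)) (p + q)) :
    descentPotential ρ η (n + 1) q r ≤ descentPotential ρ η n p q + stepDecrease ρ η q r := by
  have hη : 0 < η := by linarith
  have hm : 0 < η - ρ := by linarith
  rw [descentPotential_succ n hρ₀.ne hη.ne' hm.ne', descentPotential, mul_div_assoc (η ^ 2)]
  have hexchange := residual_norm_sq_le hρ₀ hρ₁ hρη hqr hpr
  set T := (Efun n η - Efun n ρ) / (η - ρ) ^ 2 with hT_def
  have hT_nonneg : 0 ≤ T := by positivity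
  have hreserve : η * (1 + ρ) * T ≤ Efun n ρ := by
    rw [hT_def, ← mul_div_assoc, div_le_iff₀' (by positivity)]
    exact mul_Efun_sub_le n hρ₀ hρ₁ hρη
  have hpay := mul_le_mul_of_nonneg_right hreserve (mul_nonneg (neg_nonneg.2 hρ₀.le) hpq)
  have hcost := mul_le_mul_of_nonneg_left hexchange hT_nonneg
  linear_combination hcost / 2 + hpay

lemma descentPotential_le_sub {F : ℕ → ℝ} {g : ℕ → E} {k : ℕ} (hρ₀ : ρ < 0) (hρ₁ : -1 ≤ ρ)
    (hρη : 0 ≤ η + ρ) (hT : ∀ i, 1 ≤ i → i ≤ k → 0 ≤ Efun i η - Efun i ρ)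
    (hgap : ∀ i ≤ k, 0 ≤ cocoercivityGap (η - ρ) (g (i + 1) - ρ • g i) (g i))
    (hgap₂ : ∀ i < k, 0 ≤ cocoercivityGap (η - ρ)
      ((g (i + 2) - ρ • g (i + 1)) + (g (i + 1) - ρ • g i)) (g i + g (i + 1)))
    (hdec : ∀ i ≤ k, stepDecrease ρ η (g i) (g (i + 1)) ≤ F i - F (i + 1)) :
    descentPotential ρ η (k + 1) (g k) (g (k + 1)) ≤ F 0 - F (k + 1) := by
  induction k with
  | zero =>
    rw [descentPotential_succ 0 hρ₀.ne (by linarith) (by linarith)]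
    simpa only [Efun_zero, sub_zero, zero_div, zero_mul, zero_add] using hdec 0 le_rfl
  | succ k ih =>
    have hprev := ih (fun i h₁ hi => hT i h₁ (by lia)) (fun i hi => hgap i (by lia))
      (fun i hi => hgap₂ i (by lia)) (fun i hi => hdec i (by lia))
    have hstep := descentPotential_succ_le (k + 1) hρ₀ hρ₁ hρη (hT _ (by lia) le_rfl)
      (hgap k (by lia)) (hgap (k + 1) le_rfl) (hgap₂ k (by lia))
    linarith [hdec (k + 1) le_rfl]

lemma bound_le_descentPotential (n : ℕ) (hρ₀ : ρ ≤ 0) (hρ₁ : -1 ≤ ρ) {p q : E}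
    (hpq : 0 ≤ cocoercivityGap (η - ρ) (q - ρ • p) p) :
    Efun n ρ * (‖q‖ ^ 2 / 2) +
      η ^ 2 * (Efun n η - Efun n ρ) / (η - ρ) ^ 2 * (‖q - ρ • p‖ ^ 2 / 2) ≤
      descentPotential ρ η n p q :=
  le_add_of_nonneg_right (mul_nonneg (mul_nonneg (neg_nonneg.2 hρ₀) (Efun_nonneg n hρ₁)) hpq)

end Potential

section GradientDescent

variable {E : Type*} [NormedAddCommGroup E] [InnerProductSpace ℝ E] [CompleteSpace E]
  {f : E → ℝ} {μ L γ ρ η : ℝ}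

namespace HasCurvatureBounds

lemma cocoercivityGap_nonneg (hf : HasCurvatureBounds μ L f) (a b : E) :
    0 ≤ cocoercivityGap (L - μ) (L • (a - b) - (∇ f a - ∇ f b)) (a - b) := by
  have hab := hf.interpolation a b
  have hba := hf.interpolation b a
  rw [show L • (b - a) - (∇ f b - ∇ f a) = -(L • (a - b) - (∇ f a - ∇ f b)) by module,
    ← neg_sub a b, norm_neg, norm_neg, inner_neg_right] at hba
  have hhalf (y : ℝ) : y / (2 * (L - μ)) = y / (L - μ) / 2 := by rw [mul_comm, div_div]
  rw [hhalf] at hab hba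
  rw [cocoercivityGap, inner_sub_left, inner_sub_left, real_inner_smul_left,
    real_inner_self_eq_norm_sq]
  linarith

lemma cocoercivityGap_step_nonneg (hf : HasCurvatureBounds μ L f) (hγ : 0 < γ)
    (hρ : ρ = 1 - γ * L) (hη : η = 1 - γ * μ) {a b d : E} (hab : b = a - γ • d) :
    0 ≤ cocoercivityGap (η - ρ) (∇ f b - ∇ f a + (1 - ρ) • d) d := by
  have hgap := hf.cocoercivityGap_nonneg a b
  rw [show a - b = γ • d by rw [hab, sub_sub_cancel], cocoercivityGap_smul_right hγ.ne'] at hgap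
  have hm : η - ρ = γ * (L - μ) := by rw [hρ, hη]; ring
  have hw : ∇ f b - ∇ f a + (1 - ρ) • d = L • γ • d - (∇ f a - ∇ f b) := by rw [hρ]; module
  rw [hm, hw]
  exact nonneg_of_mul_nonneg_right hgap hγ

lemma cocoercivityGap_gradientStep_nonneg (hf : HasCurvatureBounds μ L f) (hγ : 0 < γ)
    (hρ : ρ = 1 - γ * L) (hη : η = 1 - γ * μ) {a b : E} (hab : b = a - γ • ∇ f a) :
    0 ≤ cocoercivityGap (η - ρ) (∇ f b - ρ • ∇ f a) (∇ f a) := by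
  convert hf.cocoercivityGap_step_nonneg hγ hρ hη hab using 2
  module

lemma stepDecrease_le (hf : HasCurvatureBounds μ L f) (hγ : 0 < γ) (hρ : ρ = 1 - γ * L)
    (hη : η = 1 - γ * μ) {a b : E} (hab : b = a - γ • ∇ f a) :
    stepDecrease ρ η (∇ f a) (∇ f b) ≤ (f a - f b) / γ := by
  have hm : η - ρ = γ * (L - μ) := by rw [hρ, hη]; ring
  have hinterp := hf.interpolation b a
  rw [show b - a = -(γ • ∇ f a) by rw [hab]; abel,
    show L • -(γ • ∇ f a) - (∇ f b - ∇ f a) = -(∇ f b - ρ • ∇ f a) by rw [hρ]; module,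
    norm_neg, norm_neg, inner_neg_right, norm_smul, mul_pow, Real.norm_eq_abs, sq_abs,
    real_inner_smul_right, real_inner_self_eq_norm_sq] at hinterp
  have hscale (y : ℝ) : y / (2 * (γ * (L - μ))) * γ = y / (2 * (L - μ)) := by
    field_simp
  rw [stepDecrease, hm, le_div_iff₀ hγ, add_mul, hscale, hρ]
  rw [hρ] at hinterp
  linarith

lemma descentPotential_le (hf : HasCurvatureBounds μ L f) (hγ : 0 < γ) (hρ : ρ = 1 - γ * L)
    (hη : η = 1 - γ * μ) (hρ₀ : ρ < 0) (hρ₁ : -1 ≤ ρ) (hρη : 0 ≤ η + ρ) {k : ℕ}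
    (hT : ∀ i, 1 ≤ i → i ≤ k → 0 ≤ Efun i η - Efun i ρ) {x : ℕ → E}
    (hx : ∀ i ≤ k, x (i + 1) = x i - γ • ∇ f (x i)) :
    descentPotential ρ η (k + 1) (∇ f (x k)) (∇ f (x (k + 1))) ≤
      (f (x 0) - f (x (k + 1))) / γ := by
  rw [sub_div]
  refine descentPotential_le_sub (F := fun i => f (x i) / γ) (g := fun i => ∇ f (x i))
    hρ₀ hρ₁ hρη hT (fun i hi => ?gap) (fun i hi => ?gap₂) (fun i hi => ?decrease)
  case gap => exact hf.cocoercivityGap_gradientStep_nonneg hγ hρ hη (hx i hi)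
  case gap₂ =>
    have htwo : x (i + 2) = x i - γ • (∇ f (x i) + ∇ f (x (i + 1))) := by
      rw [hx (i + 1) hi, hx i hi.le]
      module
    convert hf.cocoercivityGap_step_nonneg hγ hρ hη htwo using 2
    module
  case decrease => exact (hf.stepDecrease_le hγ hρ hη (hx i hi)).trans_eq (sub_div _ _ _)

end HasCurvatureBounds

end GradientDescent

lemma lt_two_div_one_add_max_iff {t κ : ℝ} (ht : 0 ≤ t) :
    t < 2 / (1 + max κ 0) ↔ t + κ * t < 2 ∧ t < 2 := by
  rw [lt_div_iff₀ (by positivity), mul_add, mul_max_of_nonneg _ _ ht, ← max_add_add_left,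
    max_lt_iff, mul_one, mul_zero, add_zero, mul_comm κ]

/-- **Multistep descent towards the linear regime
(Lemma 9 / `lemma:general_lemma_ct_h_to_Linear`).**
Let `f ∈ F_{μ,L}`, `κ = μ/L`, `k ≥ 1`, and `γ > 0` with `γL ∈ (1, 2/(1+[κ]₊))` and
`T_i(γL,κ) ≥ 0` for all `1 ≤ i ≤ k` (i.e. `γL ≥ γ̄_k`). With `ρ = 1−γL`, `η = 1−γμ`,
after `k+1` gradient steps:
`(f(x₀) − f(x_{k+1}))/γ ≥ E_{k+1}(ρ)·‖∇f(x_{k+1})‖²/2 +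
 (η²T_{k+1}/(η−ρ)²)·‖∇f(x_{k+1}) − ρ∇f(x_k)‖²/2`. -/
theorem multistep_descent_to_linear_regime
    {E : Type*} [NormedAddCommGroup E] [InnerProductSpace ℝ E] [CompleteSpace E]
    (L μ : ℝ) (hL : 0 < L) (hμL : μ < L) (κ : ℝ) (hκ : κ = μ / L)
    (f : E → ℝ) (hdiff : Differentiable ℝ f)
    (hsmooth : ConvexOn ℝ Set.univ (fun z => L / 2 * ‖z‖ ^ 2 - f z))
    (hcurv : ConvexOn ℝ Set.univ (fun z => f z - μ / 2 * ‖z‖ ^ 2))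
    (k : ℕ) (hk : 1 ≤ k)
    (γ : ℝ) (hγ : 0 < γ) (hγL : 1 < γ * L) (hγL' : γ * L < 2 / (1 + max κ 0))
    (hT : ∀ i : ℕ, 1 ≤ i → i ≤ k → 0 ≤ Tfun i (γ * L) κ)
    (x : ℕ → E) (hx : ∀ i ≤ k, x (i + 1) = x i - γ • gradient f (x i))
    (ρ η : ℝ) (hρ : ρ = 1 - γ * L) (hη : η = 1 - γ * μ) :
    (f (x 0) - f (x (k + 1))) / γ ≥
      Efun (k + 1) ρ * (‖gradient f (x (k + 1))‖ ^ 2 / 2) +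
        η ^ 2 * Tfun (k + 1) (γ * L) κ / (η - ρ) ^ 2 *
          (‖gradient f (x (k + 1)) - ρ • gradient f (x k)‖ ^ 2 / 2) := by
  have hf : HasCurvatureBounds μ L f := ⟨hμL, hdiff, hsmooth, hcurv⟩
  have hκγ : κ * (γ * L) = γ * μ := by
    rw [hκ]
    field_simp
  have hTE (n : ℕ) : Tfun n (γ * L) κ = Efun n η - Efun n ρ := by rw [Tfun, hκγ, hρ, hη]
  obtain ⟨hsum, hlt⟩ := (lt_two_div_one_add_max_iff (by positivity)).1 hγL'
  have hρ₀ : ρ < 0 := by linarith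
  have hρ₁ : -1 ≤ ρ := by linarith
  have hρη : 0 ≤ η + ρ := by linarith
  have hgap := hf.cocoercivityGap_gradientStep_nonneg hγ hρ hη (hx k le_rfl)
  simp only [hTE] at hT ⊢
  exact (bound_le_descentPotential (k + 1) hρ₀.le hρ₁ hgap).trans
    (hf.descentPotential_le hγ hρ hη hρ₀ hρ₁ hρη hT hx)
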